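/- For 0 < d < √2, with α* = arcsin(d/2), Ξ(d) = [0,π] × [α*, π−α*], and A(d) = sup{ min(L(d,σ,δ), R(d,σ,δ)) : (σ,δ) ∈ Ξ(d) }, one has A(d) > 2π + 2·arcsin(d/2). -/

import Mathlib

open Real

/-- Distance between the centers of the two left disks, in `(σ, δ)` coordinates. -/
noncomputable def dL (d σ δ : ℝ) : ℝ :=
  Real.sqrt (d ^ 2 - 4 * d * Real.sin δ * Real.cos σ + 4 * Real.sin δ ^ 2)

/-- Distance between the centers of the two right disks, in `(σ, δ)` coordinates. -/
noncomputable def dR (d σ δ : ℝ) : ℝ :=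
  Real.sqrt (d ^ 2 + 4 * d * Real.sin δ * Real.cos σ + 4 * Real.sin δ ^ 2)

/-- Length of the LRL-type bounded-curvature path. -/
noncomputable def Lfun (d σ δ : ℝ) : ℝ :=
  2 * π - 4 * Real.arcsin (dL d σ δ / 4) + 2 * δ

/-- Length of the RLR-type bounded-curvature path. -/
noncomputable def Rfun (d σ δ : ℝ) : ℝ :=
  4 * π - 4 * Real.arcsin (dR d σ δ / 4) - 2 * δ

/-- Minimum of the LRL- and RLR-path lengths. -/
noncomputable def Cfun (d σ δ : ℝ) : ℝ :=
  min (Lfun d σ δ) (Rfun d σ δ)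

/-- The supremum of `Cfun` over the rectangle `Ξ(d) = [0, π] × [α*, π - α*]`,
where `α* = arcsin (d/2)`. -/
noncomputable def Afun (d : ℝ) : ℝ :=
  sSup ((fun p : ℝ × ℝ => Cfun d p.1 p.2) ''
    (Set.Icc 0 π ×ˢ Set.Icc (Real.arcsin (d / 2)) (π - Real.arcsin (d / 2))))

/-- For `0 < d < √2`, one has `A(d) > 2π + 2·arcsin (d/2)`. -/
theorem A_lower_bound (d : ℝ) (hd0 : 0 < d) (hd2 : d < Real.sqrt 2) :
    2 * π + 2 * Real.arcsin (d / 2) < Afun d := by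
  have hs2 : Real.sqrt 2 < 2 := by
    rw [Real.sqrt_lt' (by norm_num)]; norm_num
  obtain ⟨a, ha⟩ : ∃ a, a = Real.arcsin (d / 2) := ⟨_, rfl⟩
  have hsa : Real.sin a = d / 2 := by
    rw [ha]; exact Real.sin_arcsin (by linarith) (by linarith)
  have hpi := Real.pi_pos
  have ha0 : 0 < a := by rw [ha]; exact Real.arcsin_pos.2 (by linarith)
  have ha1 : a < π / 4 := by
    rw [ha, Real.arcsin_lt_iff_lt_sin' ⟨by linarith, by linarith⟩, Real.sin_pi_div_four]
    linarith
  have hd : d = 2 * Real.sin a := by linarith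
  obtain ⟨u, hu⟩ : ∃ u, u = π / 4 - a := ⟨_, rfl⟩
  obtain ⟨e, he⟩ : ∃ e, e = π / 2 - a := ⟨_, rfl⟩
  have hu0 : 0 < u := by linarith
  have hq0 : 0 < Real.sin (π / 4) := Real.sin_pos_of_pos_of_lt_pi (by linarith) (by linarith)
  have hq1 : Real.cos (π / 4) < 1 := by
    rw [Real.cos_pi_div_four]; linarith
  have hcs : Real.cos (π / 4) = Real.sin (π / 4) := by
    rw [Real.cos_pi_div_four, Real.sin_pi_div_four]
  have hsu : 0 < Real.sin u := Real.sin_pos_of_pos_of_lt_pi hu0 (by linarith)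
  have hcu : Real.cos u < 1 := by
    rw [← Real.cos_zero]
    exact Real.cos_lt_cos_of_nonneg_of_le_pi le_rfl (by linarith) hu0
  have hcu0 : 0 < Real.cos u := Real.cos_pos_of_mem_Ioo ⟨by linarith, by linarith⟩
  have hse : Real.sin e = Real.sin (π / 4) * Real.cos u + Real.cos (π / 4) * Real.sin u := by
    rw [← Real.sin_add]; congr 1; linarith
  have hsa' : Real.sin a = Real.sin (π / 4) * Real.cos u - Real.cos (π / 4) * Real.sin u := by
    rw [← Real.sin_sub]; congr 1; linarith
  have hL : dL d 0 e / 4 = Real.cos (π / 4) * Real.sin u := by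
    have : d ^ 2 - 4 * d * Real.sin e * Real.cos 0 + 4 * Real.sin e ^ 2
        = (4 * (Real.cos (π / 4) * Real.sin u)) ^ 2 := by
      rw [hd, Real.cos_zero, hse, hsa']; ring
    rw [dL, this, Real.sqrt_sq (by rw [hcs]; positivity)]; ring
  have hR : dR d 0 e / 4 = Real.sin (π / 4) * Real.cos u := by
    have : d ^ 2 + 4 * d * Real.sin e * Real.cos 0 + 4 * Real.sin e ^ 2
        = (4 * (Real.sin (π / 4) * Real.cos u)) ^ 2 := by
      rw [hd, Real.cos_zero, hse, hsa']; ring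
    rw [dR, this, Real.sqrt_sq (by positivity)]; ring
  have hL' : Real.arcsin (dL d 0 e / 4) < u := by
    rw [hL, Real.arcsin_lt_iff_lt_sin' ⟨by linarith, by linarith⟩]
    nlinarith
  have hR' : Real.arcsin (dR d 0 e / 4) < π / 4 := by
    rw [hR, Real.arcsin_lt_iff_lt_sin' ⟨by linarith, by linarith⟩]
    nlinarith
  have hC : 2 * π + 2 * a < Cfun d 0 e := by
    rw [Cfun, lt_min_iff, Lfun, Rfun]
    constructor <;> linarith
  rw [← ha]
  refine lt_of_lt_of_le hC (le_csSup ?_ ?_)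
  · refine ⟨8 * π, ?_⟩
    rintro _ ⟨⟨s, t⟩, ⟨_, ht⟩, rfl⟩
    have h1 := ht.2
    have h2 := Real.neg_pi_div_two_le_arcsin (dL d s t / 4)
    simp only [← ha] at h1
    refine (min_le_left _ _).trans ?_
    simp only [Lfun]
    linarith
  · refine ⟨(0, e), ⟨⟨le_rfl, hpi.le⟩, ?_, ?_⟩, rfl⟩ <;> rw [← ha] <;> simp only [] <;> linarith
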